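/- Consistent extension lemma: let Γ be a consistent (possibly infinite) set of moded propositions and P a moded proposition. Then Γ ∪ {P} and Γ ∪ {P~} are not both inconsistent. -/

import Mathlib

/-!
Write `∘A⁺ = ∘A⊕ = A⊕` and `∘A⁻ = ∘A⊖ = A⊖`. On the classical propositions, PRK proves ex falso,
consequentia mirabilis (if `Γ, P~ ⊢ P` then `Γ ⊢ P`) and hence contraposition. This suffices to
project every derivation to its classical counterpart: if `Γ ⊢ Q`, and `Δ ⊢ ∘R` for all `R ∈ Γ`,
then `Δ ⊢ ∘Q`. An elimination rule is projected by contraposing the introduction rule of the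
opposite sign: `(A ∧ B)⊕` gives `A⊕`, because `A⊖` gives `(A ∧ B)⁻` and so `(A ∧ B)⊖`.

Now if `Γ, P` is inconsistent, then `Γ, P ⊢ P~` projects to `Γ, ∘P ⊢ (∘P)~`, so `Γ ⊢ (∘P)~`.
Likewise, if `Γ, P~` is inconsistent, then `Γ ⊢ ∘P`, and ex falso makes `Γ` inconsistent.
-/

/-- Pure propositions: A ::= α | A∧B | A∨B | ¬A -/
inductive PureProp : Type
  | var : ℕ → PureProp
  | conj : PureProp → PureProp → PureProp
  | disj : PureProp → PureProp → PureProp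
  | neg : PureProp → PureProp
  deriving DecidableEq

/-- Moded propositions: A⁺ (sp), A⁻ (sn), A⊕ (cp), A⊖ (cn). -/
inductive MProp : Type
  | sp : PureProp → MProp
  | sn : PureProp → MProp
  | cp : PureProp → MProp
  | cn : PureProp → MProp
  deriving DecidableEq

/-- The opposite P~: flips the sign, keeps the strength. -/
def MProp.opp : MProp → MProp
  | .sp A => .sn A
  | .sn A => .sp A
  | .cp A => .cn A
  | .cn A => .cp A

def MProp.isStrong : MProp → Prop
  | .sp _ => True
  | .sn _ => True
  | .cp _ => False
  | .cn _ => False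

def MProp.isClassical : MProp → Prop
  | .sp _ => False
  | .sn _ => False
  | .cp _ => True
  | .cn _ => True

/-- Derivability in system PRK (natural deduction), Γ a finite set of moded propositions. -/
inductive PRK : Finset MProp → MProp → Prop
  | ax {Γ : Finset MProp} {P : MProp} : P ∈ Γ → PRK Γ P
  | abs {Γ : Finset MProp} {P Q : MProp} :
      P.isStrong → PRK Γ P → PRK Γ P.opp → PRK Γ Q
  | iConjP {Γ A B} : PRK Γ (MProp.cp A) → PRK Γ (MProp.cp B) → PRK Γ (MProp.sp (PureProp.conj A B))
  | eConjP1 {Γ A B} : PRK Γ (MProp.sp (PureProp.conj A B)) → PRK Γ (MProp.cp A)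
  | eConjP2 {Γ A B} : PRK Γ (MProp.sp (PureProp.conj A B)) → PRK Γ (MProp.cp B)
  | iDisjP1 {Γ A B} : PRK Γ (MProp.cp A) → PRK Γ (MProp.sp (PureProp.disj A B))
  | iDisjP2 {Γ A B} : PRK Γ (MProp.cp B) → PRK Γ (MProp.sp (PureProp.disj A B))
  | eDisjP {Γ A B P} : PRK Γ (MProp.sp (PureProp.disj A B)) →
      PRK (insert (MProp.cp A) Γ) P → PRK (insert (MProp.cp B) Γ) P → PRK Γ P
  | iNegP {Γ A} : PRK Γ (MProp.cn A) → PRK Γ (MProp.sp (PureProp.neg A))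
  | eNegP {Γ A} : PRK Γ (MProp.sp (PureProp.neg A)) → PRK Γ (MProp.cn A)
  | icP {Γ A} : PRK (insert (MProp.cn A) Γ) (MProp.sp A) → PRK Γ (MProp.cp A)
  | ecP {Γ A} : PRK Γ (MProp.cp A) → PRK Γ (MProp.cn A) → PRK Γ (MProp.sp A)
  | iDisjN {Γ A B} : PRK Γ (MProp.cn A) → PRK Γ (MProp.cn B) → PRK Γ (MProp.sn (PureProp.disj A B))
  | eDisjN1 {Γ A B} : PRK Γ (MProp.sn (PureProp.disj A B)) → PRK Γ (MProp.cn A)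
  | eDisjN2 {Γ A B} : PRK Γ (MProp.sn (PureProp.disj A B)) → PRK Γ (MProp.cn B)
  | iConjN1 {Γ A B} : PRK Γ (MProp.cn A) → PRK Γ (MProp.sn (PureProp.conj A B))
  | iConjN2 {Γ A B} : PRK Γ (MProp.cn B) → PRK Γ (MProp.sn (PureProp.conj A B))
  | eConjN {Γ A B P} : PRK Γ (MProp.sn (PureProp.conj A B)) →
      PRK (insert (MProp.cn A) Γ) P → PRK (insert (MProp.cn B) Γ) P → PRK Γ P
  | iNegN {Γ A} : PRK Γ (MProp.cp A) → PRK Γ (MProp.sn (PureProp.neg A))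
  | eNegN {Γ A} : PRK Γ (MProp.sn (PureProp.neg A)) → PRK Γ (MProp.cp A)
  | icN {Γ A} : PRK (insert (MProp.cp A) Γ) (MProp.sn A) → PRK Γ (MProp.cn A)
  | ecN {Γ A} : PRK Γ (MProp.cn A) → PRK Γ (MProp.cp A) → PRK Γ (MProp.sn A)

/-- Derivability from a possibly infinite set of moded propositions. -/
def SDeriv (Γ : Set MProp) (P : MProp) : Prop :=
  ∃ Δ : Finset MProp, ↑Δ ⊆ Γ ∧ PRK Δ P

/-- Consistency of a possibly infinite set of moded propositions. -/
def SetConsistent (Γ : Set MProp) : Prop := ∃ P, ¬ SDeriv Γ P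

namespace MProp

/-- The classical counterpart `∘P` of a moded proposition: same sign, classical strength. It is the
map along which derivations are projected to the classical fragment. -/
def toClassical : MProp → MProp
  | sp A => cp A
  | sn A => cn A
  | cp A => cp A
  | cn A => cn A

theorem isClassical_toClassical (P : MProp) : P.toClassical.isClassical := by
  cases P <;> trivial

theorem isClassical.opp {P : MProp} (hP : P.isClassical) : P.opp.isClassical := by
  cases P <;> trivial

theorem opp_opp (P : MProp) : P.opp.opp = P := by
  cases P <;> rfl

theorem toClassical_opp (P : MProp) : P.opp.toClassical = P.toClassical.opp := by
  cases P <;> rfl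

end MProp

namespace PRK

variable {Γ Δ : Finset MProp} {P Q R : MProp}

theorem mono (h : PRK Γ P) (hΓΔ : Γ ⊆ Δ) : PRK Δ P := by
  have insert_mono {Γ Δ : Finset MProp} (R : MProp) : Γ ⊆ Δ → insert R Γ ⊆ insert R Δ :=
    Finset.insert_subset_insert R
  induction h generalizing Δ with
  | ax h => exact .ax (hΓΔ h)
  | abs hP _ _ ih₁ ih₂ => exact .abs hP (ih₁ hΓΔ) (ih₂ hΓΔ)
  | iConjP _ _ ihA ihB => exact .iConjP (ihA hΓΔ) (ihB hΓΔ)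
  | eConjP1 _ ih => exact .eConjP1 (ih hΓΔ)
  | eConjP2 _ ih => exact .eConjP2 (ih hΓΔ)
  | iDisjP1 _ ih => exact .iDisjP1 (ih hΓΔ)
  | iDisjP2 _ ih => exact .iDisjP2 (ih hΓΔ)
  | eDisjP _ _ _ ih ihA ihB =>
    exact .eDisjP (ih hΓΔ) (ihA (insert_mono _ hΓΔ)) (ihB (insert_mono _ hΓΔ))
  | iNegP _ ih => exact .iNegP (ih hΓΔ)
  | eNegP _ ih => exact .eNegP (ih hΓΔ)
  | icP _ ih => exact .icP (ih (insert_mono _ hΓΔ))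
  | ecP _ _ ih₁ ih₂ => exact .ecP (ih₁ hΓΔ) (ih₂ hΓΔ)
  | iDisjN _ _ ihA ihB => exact .iDisjN (ihA hΓΔ) (ihB hΓΔ)
  | eDisjN1 _ ih => exact .eDisjN1 (ih hΓΔ)
  | eDisjN2 _ ih => exact .eDisjN2 (ih hΓΔ)
  | iConjN1 _ ih => exact .iConjN1 (ih hΓΔ)
  | iConjN2 _ ih => exact .iConjN2 (ih hΓΔ)
  | eConjN _ _ _ ih ihA ihB =>
    exact .eConjN (ih hΓΔ) (ihA (insert_mono _ hΓΔ)) (ihB (insert_mono _ hΓΔ))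
  | iNegN _ ih => exact .iNegN (ih hΓΔ)
  | eNegN _ ih => exact .eNegN (ih hΓΔ)
  | icN _ ih => exact .icN (ih (insert_mono _ hΓΔ))
  | ecN _ _ ih₁ ih₂ => exact .ecN (ih₁ hΓΔ) (ih₂ hΓΔ)

theorem weaken (R : MProp) (h : PRK Γ P) : PRK (insert R Γ) P :=
  h.mono (Finset.subset_insert R Γ)

theorem ax_insert (P : MProp) (Γ : Finset MProp) : PRK (insert P Γ) P :=
  .ax (Finset.mem_insert_self P Γ)

theorem ex_falso (h : PRK Γ P) (h_opp : PRK Γ P.opp) (Q : MProp) : PRK Γ Q := by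
  cases P with
  | sp A => exact .abs (P := .sp A) trivial h h_opp
  | sn A => exact .abs (P := .sn A) trivial h h_opp
  | cp A => exact .abs (P := .sp A) trivial (.ecP h h_opp) (.ecN h_opp h)
  | cn A => exact .abs (P := .sp A) trivial (.ecP h_opp h) (.ecN h h_opp)

theorem consequentia_mirabilis (hP : P.isClassical) (h : PRK (insert P.opp Γ) P) : PRK Γ P := by
  cases P with
  | sp A => exact hP.elim
  | sn A => exact hP.elim
  | cp A => exact .icP (.ecP h (.ax_insert _ _))
  | cn A => exact .icN (.ecN h (.ax_insert _ _))

theorem modus_tollens (hP : P.isClassical) (hR : PRK Γ R) (h : PRK (insert P.opp Γ) R.opp) :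
    PRK Γ P :=
  .consequentia_mirabilis hP ((hR.weaken P.opp).ex_falso h P)

theorem contrapose (hP : P.isClassical) (h : PRK (insert P Γ) Q) :
    PRK (insert Q.opp Γ) P.opp := by
  refine .modus_tollens hP.opp (.ax_insert Q.opp Γ) ?_
  rw [P.opp_opp, Q.opp_opp]
  exact h.mono (Finset.insert_subset_insert P (Finset.subset_insert Q.opp Γ))

theorem toClassical (h : PRK Γ P) : PRK Γ P.toClassical := by
  cases P with
  | sp A => exact .icP (h.weaken _)
  | sn A => exact .icN (h.weaken _)
  | cp A => exact h
  | cn A => exact h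

theorem forall_mem_insert_toClassical (S : MProp) (hΓ : ∀ R ∈ Γ, PRK Δ R.toClassical) :
    ∀ R ∈ insert S Γ, PRK (insert S.toClassical Δ) R.toClassical :=
  (Finset.forall_mem_insert _ _ _).2 ⟨.ax_insert _ _, fun R hR => (hΓ R hR).weaken _⟩

theorem toClassical_of_forall_mem (h : PRK Γ Q) (hΓ : ∀ R ∈ Γ, PRK Δ R.toClassical) :
    PRK Δ Q.toClassical := by
  induction h generalizing Δ with
  | ax hQ => exact hΓ _ hQ
  | abs _ _ _ ih ih_opp => exact (ih hΓ).ex_falso (MProp.toClassical_opp _ ▸ ih_opp hΓ) _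
  | iConjP _ _ ihA ihB => exact (PRK.iConjP (ihA hΓ) (ihB hΓ)).toClassical
  | eConjP1 _ ih => exact .modus_tollens trivial (ih hΓ) (PRK.iConjN1 (.ax_insert _ _)).toClassical
  | eConjP2 _ ih => exact .modus_tollens trivial (ih hΓ) (PRK.iConjN2 (.ax_insert _ _)).toClassical
  | iDisjP1 _ ih => exact (PRK.iDisjP1 (ih hΓ)).toClassical
  | iDisjP2 _ ih => exact (PRK.iDisjP2 (ih hΓ)).toClassical
  | @eDisjP _ A B P _ _ _ ih ihA ihB =>
    have refuteA : PRK (insert P.toClassical.opp Δ) (.cn A) :=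
      .contrapose (P := .cp A) trivial (ihA (forall_mem_insert_toClassical _ hΓ))
    have refuteB : PRK (insert P.toClassical.opp Δ) (.cn B) :=
      .contrapose (P := .cp B) trivial (ihB (forall_mem_insert_toClassical _ hΓ))
    exact .modus_tollens (MProp.isClassical_toClassical _) (ih hΓ)
      (PRK.iDisjN refuteA refuteB).toClassical
  | iNegP _ ih => exact (PRK.iNegP (ih hΓ)).toClassical
  | eNegP _ ih => exact .modus_tollens trivial (ih hΓ) (PRK.iNegN (.ax_insert _ _)).toClassical
  | icP _ ih => exact .consequentia_mirabilis trivial (ih (forall_mem_insert_toClassical _ hΓ))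
  | ecP _ _ ih _ => exact ih hΓ
  | iDisjN _ _ ihA ihB => exact (PRK.iDisjN (ihA hΓ) (ihB hΓ)).toClassical
  | eDisjN1 _ ih => exact .modus_tollens trivial (ih hΓ) (PRK.iDisjP1 (.ax_insert _ _)).toClassical
  | eDisjN2 _ ih => exact .modus_tollens trivial (ih hΓ) (PRK.iDisjP2 (.ax_insert _ _)).toClassical
  | iConjN1 _ ih => exact (PRK.iConjN1 (ih hΓ)).toClassical
  | iConjN2 _ ih => exact (PRK.iConjN2 (ih hΓ)).toClassical
  | @eConjN _ A B P _ _ _ ih ihA ihB =>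
    have proveA : PRK (insert P.toClassical.opp Δ) (.cp A) :=
      .contrapose (P := .cn A) trivial (ihA (forall_mem_insert_toClassical _ hΓ))
    have proveB : PRK (insert P.toClassical.opp Δ) (.cp B) :=
      .contrapose (P := .cn B) trivial (ihB (forall_mem_insert_toClassical _ hΓ))
    exact .modus_tollens (MProp.isClassical_toClassical _) (ih hΓ)
      (PRK.iConjP proveA proveB).toClassical
  | iNegN _ ih => exact (PRK.iNegN (ih hΓ)).toClassical
  | eNegN _ ih => exact .modus_tollens trivial (ih hΓ) (PRK.iNegP (.ax_insert _ _)).toClassical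
  | icN _ ih => exact .consequentia_mirabilis trivial (ih (forall_mem_insert_toClassical _ hΓ))
  | ecN _ _ ih _ => exact ih hΓ

theorem opp_toClassical_of_insert (h : PRK (insert P Γ) P.opp) : PRK Γ P.toClassical.opp := by
  have h_proj : PRK (insert P.toClassical Γ) P.toClassical.opp :=
    P.toClassical_opp ▸ h.toClassical_of_forall_mem
      (forall_mem_insert_toClassical P fun _ hR => (ax hR).toClassical)
  refine .consequentia_mirabilis P.isClassical_toClassical.opp ?_
  rwa [MProp.opp_opp]

end PRK

section SetDerivability

variable {Γ : Set MProp} {P Q : MProp}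

theorem not_setConsistent_iff : ¬ SetConsistent Γ ↔ ∀ Q, SDeriv Γ Q :=
  not_exists_not

theorem SDeriv.exists_insert (h : SDeriv (insert P Γ) Q) :
    ∃ Δ : Finset MProp, ↑Δ ⊆ Γ ∧ PRK (insert P Δ) Q := by
  obtain ⟨Δ, hΔ, h⟩ := h
  refine ⟨Δ.erase P, ?_, h.mono (Finset.insert_erase_subset P Δ)⟩
  rwa [Finset.coe_erase, Set.sdiff_singleton_subset_iff]

theorem SDeriv.opp_toClassical_of_insert (h : SDeriv (insert P Γ) P.opp) :
    SDeriv Γ P.toClassical.opp :=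
  let ⟨Δ, hΔ, h⟩ := h.exists_insert
  ⟨Δ, hΔ, h.opp_toClassical_of_insert⟩

theorem SDeriv.ex_falso (h : SDeriv Γ P) (h_opp : SDeriv Γ P.opp) (Q : MProp) : SDeriv Γ Q := by
  obtain ⟨Δ, hΔ, h⟩ := h
  obtain ⟨Δ', hΔ', h_opp⟩ := h_opp
  refine ⟨Δ ∪ Δ', by simp only [Finset.coe_union, Set.union_subset hΔ hΔ'], ?_⟩
  exact (h.mono Finset.subset_union_left).ex_falso (h_opp.mono Finset.subset_union_right) Q

end SetDerivability

/-- Consistent extension lemma: Γ ∪ {P} and Γ ∪ {P~} are not both inconsistent. -/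
theorem consistent_extension (Γ : Set MProp) (P : MProp) (hc : SetConsistent Γ) :
    ¬ (¬ SetConsistent (Γ ∪ {P}) ∧ ¬ SetConsistent (Γ ∪ {P.opp})) := by
  simp only [Set.union_singleton, not_setConsistent_iff]
  rintro ⟨hP, hP_opp⟩
  obtain ⟨Q, hQ⟩ := hc
  have refuted : SDeriv Γ P.toClassical.opp := (hP P.opp).opp_toClassical_of_insert
  have proved : SDeriv Γ P.toClassical := by
    simpa only [MProp.toClassical_opp, MProp.opp_opp] using
      (hP_opp P.opp.opp).opp_toClassical_of_insert
  exact hQ (proved.ex_falso refuted Q)
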